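/- (Log-cutoff function) For every δ ∈ (0, 1/4) and ε ∈ (0,1), there exists a C^∞ function τ : ℝ → ℝ with τ = 1 on (−∞, δε], τ = 0 on [ε, ∞), 0 ≤ τ ≤ 1 everywhere, and for every positive integer l there is a constant C_l > 0 (independent of δ, ε) such that |τ^{(l)}(t)| ≤ C_l t^{−l} |log δ|^{−1} for all t > 0. -/

import Mathlib

/-!
Take `τ = h ∘ log` near each `t > 0`, where `h x = smoothTransition ((log ε - x) / |log δ|)`.
Since `d/dt` sends `t⁻ˡ H(log t)` to `t⁻ˡ⁻¹ (H' - l H)(log t)`, the derivative of order `l` is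
`t⁻ˡ` times a combination of `h', …, h⁽ˡ⁾` at `log t` whose coefficients are the signed Stirling
numbers of the first kind. For `l ≥ 1` the function `h` itself does not occur, and every derivative
of positive order of `h` carries at least one factor `|log δ|⁻¹`; the surplus factors are bounded
because `|log δ| ≥ 1 - δ` and `δ` stays away from `1`.
-/

open Filter Finset Topology
open scoped ContDiff Nat

section Stirling

lemma sum_stirlingFirst_succ_smul {M : Type*} [AddCommMonoid M] (n : ℕ) (v : ℕ → M) :
    ∑ k ∈ range (n + 2), (n + 1).stirlingFirst k • v k =
      ∑ k ∈ range (n + 1), n.stirlingFirst k • v (k + 1) +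
        n • ∑ k ∈ range (n + 1), n.stirlingFirst k • v k := by
  have shift : n • ∑ k ∈ range (n + 1), n.stirlingFirst k • v k =
      ∑ k ∈ range (n + 1), (n * n.stirlingFirst (k + 1)) • v (k + 1) := by
    have first_eq_zero : n * n.stirlingFirst 0 = 0 := by cases n <;> simp
    have last_eq_zero : n.stirlingFirst (n + 1) = 0 :=
      Nat.stirlingFirst_eq_zero_of_lt n.lt_succ_self
    rw [sum_range_succ', sum_range_succ, smul_add, smul_sum]
    simp only [smul_smul, first_eq_zero, last_eq_zero, mul_zero, zero_smul]
  rw [shift, sum_range_succ', Nat.stirlingFirst_succ_zero, zero_smul, add_zero, ← sum_add_distrib]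
  refine sum_congr rfl fun k _ => ?_
  rw [Nat.stirlingFirst_succ_succ, add_smul, add_comm]

lemma sum_stirlingFirst (n : ℕ) : ∑ k ∈ range (n + 1), n.stirlingFirst k = n ! := by
  induction n with
  | zero => simp
  | succ n ih =>
    have recursion := sum_stirlingFirst_succ_smul n fun _ => 1
    simp only [smul_eq_mul, mul_one, ih] at recursion
    rw [recursion, Nat.factorial_succ]
    ring

end Stirling

section CompLog

variable {E : Type*} [NormedAddCommGroup E] [NormedSpace ℝ E] {h : ℝ → E} {l : ℕ} {t : ℝ}

lemma hasDerivAt_inv_pow_smul_comp_log (l : ℕ) {h' : E} (hh : HasDerivAt h h' (Real.log t))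
    (ht : t ≠ 0) :
    HasDerivAt (fun s => s⁻¹ ^ l • h (Real.log s))
      (t⁻¹ ^ (l + 1) • (h' - l • h (Real.log t))) t := by
  refine (((hasDerivAt_inv ht).fun_pow l).fun_smul
    (hh.scomp t (Real.hasDerivAt_log ht))).congr_deriv ?_
  have coeff_eq : l * t⁻¹ ^ (l - 1) * -(t ^ 2)⁻¹ = -(t⁻¹ ^ (l + 1) * l) := by
    cases l with
    | zero => simp
    | succ m => rw [Nat.add_sub_cancel]; ring
  rw [coeff_eq, Function.comp_apply]
  module

theorem iteratedDeriv_comp_log (hh : ContDiff ℝ l h) (ht : t ≠ 0) :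
    iteratedDeriv l (h ∘ Real.log) t = t⁻¹ ^ l • ∑ k ∈ range (l + 1),
      l.stirlingFirst k • (-1 : ℝ) ^ (l + k) • iteratedDeriv k h (Real.log t) := by
  induction l generalizing t with
  | zero => simp
  | succ l ih =>
    set H : ℝ → E := fun x => ∑ k ∈ range (l + 1),
      l.stirlingFirst k • (-1 : ℝ) ^ (l + k) • iteratedDeriv k h x
    set H' : ℝ → E := fun x => ∑ k ∈ range (l + 1),
      l.stirlingFirst k • (-1 : ℝ) ^ (l + k) • iteratedDeriv (k + 1) h x
    have formula_near : iteratedDeriv l (h ∘ Real.log) =ᶠ[𝓝 t]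
        fun s => s⁻¹ ^ l • H (Real.log s) := by
      filter_upwards [isOpen_ne.mem_nhds ht] with s hs
      exact ih (hh.of_le (by exact_mod_cast l.le_succ)) hs
    have hasDerivAt_H (x : ℝ) : HasDerivAt H (H' x) x := by
      refine HasDerivAt.fun_sum fun k hk => (HasDerivAt.fun_const_smul _ ?_).fun_const_smul _
      rw [iteratedDeriv_succ]
      exact (hh.differentiable_iteratedDeriv k
        (by exact_mod_cast mem_range.1 hk)).differentiableAt.hasDerivAt
    rw [iteratedDeriv_succ, formula_near.deriv_eq,
      (hasDerivAt_inv_pow_smul_comp_log l (hasDerivAt_H _) ht).deriv, sum_stirlingFirst_succ_smul]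
    have sign_same (k : ℕ) : (-1 : ℝ) ^ (l + 1 + (k + 1)) = (-1) ^ (l + k) := by ring
    have sign_flip (k : ℕ) : (-1 : ℝ) ^ (l + 1 + k) = -(-1) ^ (l + k) := by ring
    simp only [sign_same, sign_flip, neg_smul, smul_neg, sum_neg_distrib, ← sub_eq_add_neg, H, H']

theorem norm_iteratedDeriv_comp_log_le (hl : l ≠ 0) (hh : ContDiff ℝ l h) (ht : t ≠ 0) {B : ℝ}
    (hB : ∀ k, k ≠ 0 → k ≤ l → ‖iteratedDeriv k h (Real.log t)‖ ≤ B) :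
    ‖iteratedDeriv l (h ∘ Real.log) t‖ ≤ l ! * B * |t|⁻¹ ^ l := by
  have term_le (k : ℕ) (hk : k ∈ range (l + 1)) :
      ‖l.stirlingFirst k • (-1 : ℝ) ^ (l + k) • iteratedDeriv k h (Real.log t)‖ ≤
        l.stirlingFirst k * B := by
    rcases eq_or_ne k 0 with rfl | hk0
    · obtain ⟨m, rfl⟩ := Nat.exists_eq_succ_of_ne_zero hl
      simp
    · rw [← Nat.cast_smul_eq_nsmul ℝ, norm_smul, norm_smul]
      simpa using mul_le_mul_of_nonneg_left (hB k hk0 (mem_range_succ_iff.1 hk))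
        (l.stirlingFirst k).cast_nonneg
  calc ‖iteratedDeriv l (h ∘ Real.log) t‖
      ≤ |t|⁻¹ ^ l * ∑ k ∈ range (l + 1), l.stirlingFirst k * B := by
        rw [iteratedDeriv_comp_log hh ht, norm_smul, norm_pow, norm_inv, Real.norm_eq_abs]
        gcongr
        exact norm_sum_le_of_le _ term_le
    _ = l ! * B * |t|⁻¹ ^ l := by
        rw [← sum_mul, ← Nat.cast_sum, sum_stirlingFirst, mul_comm]

end CompLog

lemma norm_iteratedDeriv_comp_sub_div {E : Type*} [NormedAddCommGroup E] [NormedSpace ℝ E]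
    {f : ℝ → E} {k : ℕ} (hf : ContDiff ℝ k f) (c L x : ℝ) :
    ‖iteratedDeriv k (fun y => f ((c - y) / L)) x‖ =
      |L|⁻¹ ^ k * ‖iteratedDeriv k f ((c - x) / L)‖ := by
  have scaled : iteratedDeriv k (fun y => f (y / L)) =
      fun y => L⁻¹ ^ k • iteratedDeriv k f (y / L) := by
    simp only [div_eq_inv_mul]
    exact iteratedDeriv_comp_const_smul hf L⁻¹
  simp [iteratedDeriv_comp_const_sub k (fun y => f (y / L)), scaled, norm_smul]

section SmoothTransition

lemma hasCompactSupport_iteratedDeriv {𝕜 F : Type*} [NontriviallyNormedField 𝕜]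
    [NormedAddCommGroup F] [NormedSpace 𝕜 F] {f : 𝕜 → F} (hf : HasCompactSupport f) (n : ℕ) :
    HasCompactSupport (iteratedDeriv n f) := by
  induction n with
  | zero => rwa [iteratedDeriv_zero]
  | succ n ih => rw [iteratedDeriv_succ]; exact ih.deriv

lemma hasCompactSupport_deriv_smoothTransition :
    HasCompactSupport (deriv Real.smoothTransition) := by
  refine HasCompactSupport.intro (isCompact_Icc (a := (0 : ℝ)) (b := 1)) fun x hx => ?_
  suffices ∃ c : ℝ, Real.smoothTransition =ᶠ[𝓝 x] fun _ => c by
    obtain ⟨c, hc⟩ := this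
    rw [hc.deriv_eq, deriv_const]
  rcases lt_or_ge x 0 with hx0 | hx0
  · exact ⟨0, (eventually_lt_nhds hx0).mono fun y hy => Real.smoothTransition.zero_of_nonpos hy.le⟩
  · have hx1 : 1 < x := not_le.1 fun hx1 => hx ⟨hx0, hx1⟩
    exact ⟨1, (eventually_gt_nhds hx1).mono fun y hy => Real.smoothTransition.one_of_one_le hy.le⟩

lemma exists_norm_iteratedDeriv_smoothTransition_le (k : ℕ) :
    ∃ M > 0, ∀ x, ‖iteratedDeriv k Real.smoothTransition x‖ ≤ M := by
  cases k with
  | zero =>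
    refine ⟨1, one_pos, fun x => ?_⟩
    rw [iteratedDeriv_zero, Real.norm_of_nonneg (Real.smoothTransition.nonneg x)]
    exact Real.smoothTransition.le_one x
  | succ k =>
    have cont : Continuous (iteratedDeriv (k + 1) Real.smoothTransition) :=
      (Real.smoothTransition.contDiff (n := (k + 1 : ℕ))).continuous_iteratedDeriv _ le_rfl
    have supp : HasCompactSupport (iteratedDeriv (k + 1) Real.smoothTransition) := by
      rw [iteratedDeriv_succ']
      exact hasCompactSupport_iteratedDeriv hasCompactSupport_deriv_smoothTransition k
    obtain ⟨M, hM⟩ := supp.exists_bound_of_continuous cont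
    exact ⟨max M 1, by positivity, fun x => (hM x).trans (le_max_left M 1)⟩

end SmoothTransition

/-- The logarithmic cutoff: the truncation to `[0, 1]` of `log (ε / t) / log (1 / δ)`, smoothed by
using `Real.smoothTransition` in place of the piecewise linear truncation. The value for `t ≤ 0` is
prescribed separately because `Real.log` is even. -/
noncomputable def logCutoff (δ ε t : ℝ) : ℝ :=
  if t ≤ 0 then 1 else Real.smoothTransition (Real.log (ε / t) / Real.log (1 / δ))

namespace logCutoff

variable {δ ε t : ℝ}

lemma nonneg : 0 ≤ logCutoff δ ε t := by
  unfold logCutoff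
  split_ifs
  exacts [zero_le_one, Real.smoothTransition.nonneg _]

lemma le_one : logCutoff δ ε t ≤ 1 := by
  unfold logCutoff
  split_ifs
  exacts [le_rfl, Real.smoothTransition.le_one _]

lemma eq_one_of_le (hδ : δ ∈ Set.Ioo 0 1) (ht : t ≤ δ * ε) : logCutoff δ ε t = 1 := by
  unfold logCutoff
  split_ifs with ht0
  · rfl
  · apply Real.smoothTransition.one_of_one_le
    rw [not_le] at ht0
    rw [one_le_div (Real.log_pos (one_lt_one_div hδ.1 hδ.2))]
    refine Real.log_le_log (one_div_pos.2 hδ.1) ?_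
    rwa [div_le_div_iff₀ hδ.1 ht0, one_mul, mul_comm]

lemma eq_zero_of_ge (hδ : δ ∈ Set.Ioo 0 1) (hε : 0 < ε) (ht : ε ≤ t) : logCutoff δ ε t = 0 := by
  have ht0 : 0 < t := hε.trans_le ht
  rw [logCutoff, if_neg ht0.not_ge]
  apply Real.smoothTransition.zero_of_nonpos
  exact div_nonpos_of_nonpos_of_nonneg
    (Real.log_nonpos (by positivity) ((div_le_one ht0).2 ht))
    (Real.log_pos (one_lt_one_div hδ.1 hδ.2)).le

lemma eventuallyEq_comp_log (hε : ε ≠ 0) (ht : 0 < t) :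
    logCutoff δ ε =ᶠ[𝓝 t]
      (fun x => Real.smoothTransition ((Real.log ε - x) / Real.log (1 / δ))) ∘ Real.log := by
  filter_upwards [eventually_gt_nhds ht] with s hs
  rw [logCutoff, if_neg hs.not_ge, Real.log_div hε hs.ne', Function.comp_apply]

lemma contDiff (hδ : δ ∈ Set.Ioo 0 1) (hε : 0 < ε) : ContDiff ℝ ∞ (logCutoff δ ε) := by
  rw [contDiff_iff_contDiffAt]
  intro t
  rcases lt_or_ge t (δ * ε) with ht | ht
  · have near_one : logCutoff δ ε =ᶠ[𝓝 t] fun _ => 1 :=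
      (eventually_lt_nhds ht).mono fun s hs => eq_one_of_le hδ hs.le
    exact contDiffAt_const.congr_of_eventuallyEq near_one
  · have ht0 : 0 < t := (mul_pos hδ.1 hε).trans_le ht
    refine ContDiffAt.congr_of_eventuallyEq ?_ (eventuallyEq_comp_log hε.ne' ht0)
    exact Real.smoothTransition.contDiffAt.comp t
      ((contDiffAt_const.sub (Real.contDiffAt_log.2 ht0.ne')).div_const _)

theorem exists_abs_iteratedDeriv_le {a : ℝ} (ha : 0 < a) (l : ℕ) :
    ∃ C > 0, ∀ δ ε t : ℝ, a ≤ |Real.log δ| → ε ≠ 0 → 0 < t → l ≠ 0 →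
      |iteratedDeriv l (logCutoff δ ε) t| ≤ C * t⁻¹ ^ l * |Real.log δ|⁻¹ := by
  choose M hM0 hM using exists_norm_iteratedDeriv_smoothTransition_le
  set S : ℝ := ∑ k ∈ range (l + 1), M k * a⁻¹ ^ (k - 1)
  have hS : 0 < S := sum_pos
    (fun k _ => mul_pos (hM0 k) (pow_pos (inv_pos.2 ha) _)) nonempty_range_add_one
  refine ⟨l ! * S, by positivity, fun δ ε t hδ hε ht hl => ?_⟩
  set L : ℝ := |Real.log δ|
  have hL : |Real.log (1 / δ)| = L := by rw [one_div, Real.log_inv, abs_neg]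
  set h : ℝ → ℝ := fun x => Real.smoothTransition ((Real.log ε - x) / Real.log (1 / δ))
  have deriv_le (k : ℕ) (hk0 : k ≠ 0) (hk : k ≤ l) :
      ‖iteratedDeriv k h (Real.log t)‖ ≤ S * L⁻¹ := by
    rw [norm_iteratedDeriv_comp_sub_div Real.smoothTransition.contDiff, hL]
    calc L⁻¹ ^ k * ‖iteratedDeriv k Real.smoothTransition _‖
        ≤ L⁻¹ ^ k * M k := by gcongr; exact hM k _
      _ = M k * L⁻¹ ^ (k - 1) * L⁻¹ := by rw [← pow_sub_one_mul hk0]; ring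
      _ ≤ M k * a⁻¹ ^ (k - 1) * L⁻¹ := by
          have := (hM0 k).le
          gcongr
      _ ≤ S * L⁻¹ := by
          gcongr
          exact single_le_sum (f := fun k => M k * a⁻¹ ^ (k - 1))
            (fun j _ => mul_nonneg (hM0 j).le (by positivity)) (mem_range_succ_iff.2 hk)
  have contDiff_h : ContDiff ℝ l h :=
    Real.smoothTransition.contDiff.comp ((contDiff_const.sub contDiff_id).div_const _)
  rw [(eventuallyEq_comp_log hε ht).iteratedDeriv_eq]
  calc |iteratedDeriv l (h ∘ Real.log) t|
      ≤ l ! * (S * L⁻¹) * |t|⁻¹ ^ l := norm_iteratedDeriv_comp_log_le hl contDiff_h ht.ne' deriv_le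
    _ = l ! * S * t⁻¹ ^ l * L⁻¹ := by rw [abs_of_pos ht]; ring

end logCutoff

theorem stmt12_general {δ₀ : ℝ} (hδ₀ : δ₀ < 1) :
    ∃ C : ℕ → ℝ, (∀ l, 0 < C l) ∧
      ∀ δ ∈ Set.Ioc (0 : ℝ) δ₀, ∀ ε > (0 : ℝ),
        ∃ τ : ℝ → ℝ, ContDiff ℝ (⊤ : ℕ∞) τ ∧
          (∀ t ≤ δ * ε, τ t = 1) ∧
          (∀ t, ε ≤ t → τ t = 0) ∧
          (∀ t, 0 ≤ τ t ∧ τ t ≤ 1) ∧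
          (∀ l : ℕ, 1 ≤ l → ∀ t : ℝ, 0 < t →
            |iteratedDeriv l τ t| ≤ C l * t ^ (-(l : ℝ)) * |Real.log δ|⁻¹) := by
  choose C hC0 hC using logCutoff.exists_abs_iteratedDeriv_le (sub_pos.2 hδ₀)
  refine ⟨C, hC0, fun δ ⟨hδ0, hδ⟩ ε hε => ?_⟩
  have hδ01 : δ ∈ Set.Ioo 0 1 := ⟨hδ0, hδ.trans_lt hδ₀⟩
  have log_bound : 1 - δ₀ ≤ |Real.log δ| := by
    linarith [Real.log_le_sub_one_of_pos hδ0, neg_le_abs (Real.log δ)]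
  refine ⟨logCutoff δ ε, logCutoff.contDiff hδ01 hε, fun t => logCutoff.eq_one_of_le hδ01,
    fun t => logCutoff.eq_zero_of_ge hδ01 hε, fun t => ⟨logCutoff.nonneg, logCutoff.le_one⟩,
    fun l hl t ht => ?_⟩
  rw [Real.rpow_neg ht.le, Real.rpow_natCast, ← inv_pow]
  exact hC l δ ε t log_bound hε.ne' ht (Nat.one_le_iff_ne_zero.1 hl)

/-- (Log-cutoff function.) There are constants `C l > 0`, one for
each positive integer `l` (independent of `δ` and `ε`), such that for every
`δ ∈ (0, 1/4)` and `ε ∈ (0, 1)` there exists a `C^∞` function `τ : ℝ → ℝ` with: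
`τ = 1` on `(−∞, δε]`; `τ = 0` on `[ε, ∞)`; `0 ≤ τ ≤ 1` everywhere; and
`|τ⁽ˡ⁾(t)| ≤ C l · t⁻ˡ · |log δ|⁻¹` for all `t > 0` and all `l ≥ 1`. -/
theorem stmt12 :
    ∃ C : ℕ → ℝ, (∀ l, 0 < C l) ∧
      ∀ δ ∈ Set.Ioo (0 : ℝ) (1 / 4), ∀ ε ∈ Set.Ioo (0 : ℝ) 1,
        ∃ τ : ℝ → ℝ, ContDiff ℝ (⊤ : ℕ∞) τ ∧
          (∀ t ≤ δ * ε, τ t = 1) ∧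
          (∀ t, ε ≤ t → τ t = 0) ∧
          (∀ t, 0 ≤ τ t ∧ τ t ≤ 1) ∧
          (∀ l : ℕ, 1 ≤ l → ∀ t : ℝ, 0 < t →
            |iteratedDeriv l τ t| ≤ C l * t ^ (-(l : ℝ)) * |Real.log δ|⁻¹) := by
  obtain ⟨C, hC0, hC⟩ := stmt12_general (δ₀ := 1 / 4) (by norm_num)
  exact ⟨C, hC0, fun δ hδ ε hε => hC δ ⟨hδ.1, hδ.2.le⟩ ε hε.1⟩
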